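/- For every n ∈ ℤ there is a ℂ-linear bijection Φ from the charge-n component F_{(n)} onto the polynomial algebra ℂ[x_1, x_2, x_3, …] in countably many commuting variables such that Φ(v_n) = 1 and, for every m ≥ 1 and every u ∈ F_{(n)}: Φ(h_m u) = ∂Φ(u)/∂x_m, Φ(h_{−m} u) = m · x_m · Φ(u), and Φ(h_0 u) = n · Φ(u). (Thus F^{⊗1/2} = ⊕_{n∈ℤ} F_{(n)} decomposes as a direct sum of irreducible highest weight Heisenberg modules B_n ≅ ℂ[x_1, x_2, …].) -/

import Mathlib

noncomputable section

/-- The neutral fermion Fock space `F = F^{⊗1/2}`: the complex vector space with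
basis `{e_S : S a finite subset of ℕ}`. -/
abbrev FockD : Type := Finset ℕ →₀ ℂ

/-- Basis vector `e_S`. -/
def eD (S : Finset ℕ) : FockD := Finsupp.single S 1

/-- Action of the fermion mode `a_m` on the basis vector `e_S`. -/
def aVec (m : ℤ) (S : Finset ℕ) : FockD :=
  if 0 ≤ m then
    if m.toNat ∈ S then 0
    else ((-1 : ℂ) ^ (S.filter (fun s => m.toNat < s)).card) • eD (insert m.toNat S)
  else
    if (-m - 1).toNat ∈ S then
      ((-1 : ℂ) ^ (S.filter (fun s => (-m - 1).toNat < s)).card) • eD (S.erase ((-m - 1).toNat))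
    else 0

/-- The fermion mode `a_m` as a linear operator on `F`. -/
def aOp (m : ℤ) : FockD →ₗ[ℂ] FockD :=
  Finsupp.lsum ℂ fun S => LinearMap.toSpanSingleton ℂ FockD (aVec m S)

/-- Fermionic normal ordered product `:a_i a_j:`. -/
def NO (i j : ℤ) : FockD →ₗ[ℂ] FockD :=
  if 0 ≤ i then (aOp i).comp (aOp j) else -((aOp j).comp (aOp i))

/-- Heisenberg operator `h_n = (1/2) ∑_{i∈ℤ} (−1)^{i+1} :a_i a_{−2n−1−i}:`
(on each vector only finitely many summands are nonzero). -/
def hD (n : ℤ) (x : FockD) : FockD :=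
  (1 / 2 : ℂ) • ∑ᶠ i : ℤ, ((-1 : ℂ) ^ (i + 1)) • NO i (-2 * n - 1 - i) x

/-- Virasoro operator `L^{1/2}_m = (1/2) ∑_{i∈ℤ} i · :a_i a_{−m−i−1}:`. -/
def LhalfD (m : ℤ) (x : FockD) : FockD :=
  (1 / 2 : ℂ) • ∑ᶠ i : ℤ, (i : ℂ) • NO i (-m - i - 1) x

/-- 2-point Virasoro operator `L¹_n = (1/2) ∑_{j∈ℤ} :h_j h_{n−j}:`, where the bosonic
normal ordered product is `:h_j h_k: = h_j h_k` if `j ≤ k` and `h_k h_j` otherwise. -/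
def L1D (n : ℤ) (x : FockD) : FockD :=
  (1 / 2 : ℂ) • ∑ᶠ j : ℤ, if j ≤ n - j then hD j (hD (n - j) x) else hD (n - j) (hD j x)

/-- Charge `c(S) = #{s ∈ S : s odd} − #{s ∈ S : s even}`. -/
def chg (S : Finset ℕ) : ℤ :=
  ((S.filter fun s => Odd s).card : ℤ) - ((S.filter fun s => Even s).card : ℤ)

/-- Charge-`n` component `F_{(n)}`: the span of the `e_S` with `c(S) = n`. -/
def FockComp (n : ℤ) : Submodule ℂ FockD :=
  Submodule.span ℂ {x : FockD | ∃ S : Finset ℕ, chg S = n ∧ x = eD S}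

/-- Index set of the vacuum-like vector `v_n`. -/
def vSet (n : ℤ) : Finset ℕ :=
  if 0 ≤ n then (Finset.range n.toNat).image fun i => 2 * i + 1
  else (Finset.range (-n).toNat).image fun i => 2 * i

/-- Vacuum-like vector `v_n` (`v_0 = e_∅`, `v_n = e_{{1,3,…,2n−1}}`,
`v_{−n} = e_{{0,2,…,2n−2}}` for `n > 0`). -/
def vD (n : ℤ) : FockD := eD (vSet n)

/-!
The Clifford relations give `[h_n, a_k] = (-1)^(k+1) a_{k-2n}`. The Fock space is irreducible under
the fermion modes, so an operator commuting with all of them is a scalar that can be read off on the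
vacuum. This yields the Heisenberg relations and Sugawara's identity
`2 L_0 = h_0² + 2 ∑_{m ≥ 1} h_{-m} h_m`, in which `2 L_0` acts on `e_S` by the doubled energy
`∑ s ∈ S, (2 ⌊s / 2⌋ + 1)`. The doubled energy of a set of charge `n` is at least `n²`, with
equality only for `v_n`. Hence `v_n` is killed by all `h_m` with `m > 0`, and by induction on the
energy Sugawara's identity shows that the `h_{-m}` generate the charge component from `v_n`. The
resulting surjection `p ↦ p(h_{-1}, h_{-2} / 2, …) v_n` from the polynomial algebra intertwines
`∂/∂x_m` with `h_m`; its kernel is stable under all derivatives and does not contain `1`, so it is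
zero.
-/

section WeylAlgebra

open MvPolynomial

variable {σ R : Type*}

open scoped IsMulCommutative in
lemma exists_algHom_X_eq_of_commute [CommSemiring R] {B : Type*} [Semiring B] [Algebra R B]
    (A : σ → B) (hA : ∀ i j, Commute (A i) (A j)) :
    ∃ θ : MvPolynomial σ R →ₐ[R] B, ∀ i, θ (X i) = A i := by
  have hcomm : IsMulCommutative (Algebra.adjoin R (Set.range A)) :=
    Algebra.isMulCommutative_adjoin R <| by
      rintro _ ⟨i, rfl⟩ _ ⟨j, rfl⟩
      exact hA i j
  let generator (i : σ) : Algebra.adjoin R (Set.range A) :=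
    ⟨A i, Algebra.subset_adjoin ⟨i, rfl⟩⟩
  exact ⟨(Algebra.adjoin R (Set.range A)).val.comp (aeval generator), fun i => by
    simp only [AlgHom.comp_apply, aeval_X, Subalgebra.val_apply, generator]⟩

lemma eq_C_of_forall_pderiv_eq_zero [CommSemiring R] [NoZeroDivisors R] [CharZero R]
    {p : MvPolynomial σ R} (hp : ∀ i, pderiv i p = 0) : p = C (coeff 0 p) := by
  classical
  ext s
  rw [coeff_C]
  split_ifs with hs
  · rw [hs]
  · obtain ⟨i, hi⟩ : ∃ i, s i ≠ 0 := DFunLike.ne_iff.1 (Ne.symm hs)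
    have hcoeff := congrArg (coeff (s - Finsupp.single i 1)) (hp i)
    rw [coeff_pderiv, tsub_add_cancel_of_le (Finsupp.single_le_iff.2 (Nat.one_le_iff_ne_zero.2 hi)),
      coeff_zero] at hcoeff
    exact (mul_eq_zero.1 hcoeff).resolve_right (Nat.cast_add_one_ne_zero _)

lemma totalDegree_pderiv_lt [CommSemiring R] {p : MvPolynomial σ R} {i : σ}
    (hp : pderiv i p ≠ 0) : (pderiv i p).totalDegree < p.totalDegree := by
  have degree_lt : ∀ s ∈ (pderiv i p).support, s.degree < p.totalDegree := by
    intro s hs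
    rw [mem_support_iff, coeff_pderiv] at hs
    have hle : (s + Finsupp.single i 1).degree ≤ p.totalDegree :=
      le_totalDegree (mem_support_iff.2 (left_ne_zero_of_mul hs))
    rwa [map_add, Finsupp.degree_single] at hle
  obtain ⟨s, hs⟩ := support_nonempty.2 hp
  rw [totalDegree, Finset.sup_lt_iff (bot_le.trans_lt (degree_lt s hs))]
  exact degree_lt

lemma eq_bot_of_pderiv_mem [Field R] [CharZero R] {N : Submodule R (MvPolynomial σ R)}
    (hN : ∀ i, ∀ p ∈ N, pderiv i p ∈ N) (h1 : (1 : MvPolynomial σ R) ∉ N) : N = ⊥ := by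
  rw [Submodule.eq_bot_iff]
  suffices ∀ (d : ℕ) (p : MvPolynomial σ R), p.totalDegree = d → p ∈ N → p = 0 from
    fun p hp => this _ p rfl hp
  intro d
  induction d using Nat.strong_induction_on with
  | _ d ih =>
    intro p hd hp
    have hderiv : ∀ i, pderiv i p = 0 := fun i => by
      by_contra hne
      exact hne (ih _ (hd ▸ totalDegree_pderiv_lt hne) _ rfl (hN i p hp))
    have hconst := eq_C_of_forall_pderiv_eq_zero hderiv
    by_contra hne
    have hcoeff : coeff 0 p ≠ 0 := fun h0 => hne (by rw [hconst, h0, C_0])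
    refine h1 ((N.smul_mem_iff hcoeff).1 ?_)
    rwa [smul_eq_C_mul, mul_one, ← hconst]

/-- Canonical commutation relations: `create i` and `annihilate i` act on `V` as
multiplication by `X i` and `∂ / ∂ X i` would, and `v` is a vacuum, killed by every
`annihilate i`. -/
structure IsBosonicVacuum [CommSemiring R] {V : Type*} [AddCommMonoid V] [Module R V]
    [DecidableEq σ] (create annihilate : σ → Module.End R V) (v : V) : Prop where
  create_comm (i j : σ) : Commute (create i) (create j)
  annihilate_create (i j : σ) (w : V) : annihilate i (create j w) =
    create j (annihilate i w) + if i = j then w else 0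
  annihilate_vacuum (i : σ) : annihilate i v = 0

namespace IsBosonicVacuum

variable [DecidableEq σ] {V : Type*}

lemma exists_linearMap [CommSemiring R] [AddCommMonoid V] [Module R V]
    {create annihilate : σ → Module.End R V} {v : V} (h : IsBosonicVacuum create annihilate v) :
    ∃ Ψ : MvPolynomial σ R →ₗ[R] V, Ψ 1 = v ∧ (∀ i p, Ψ (X i * p) = create i (Ψ p)) ∧
      ∀ i p, Ψ (pderiv i p) = annihilate i (Ψ p) := by
  obtain ⟨θ, hθ⟩ := exists_algHom_X_eq_of_commute (R := R) create h.create_comm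
  let Ψ : MvPolynomial σ R →ₗ[R] V := (LinearMap.applyₗ v).comp θ.toLinearMap
  have Ψ_one : Ψ 1 = v := by simp [Ψ]
  have Ψ_X_mul (i p) : Ψ (X i * p) = create i (Ψ p) := by simp [Ψ, hθ]
  refine ⟨Ψ, Ψ_one, Ψ_X_mul, fun i p => ?_⟩
  induction p using MvPolynomial.induction_on with
  | C a =>
    rw [pderiv_C, map_zero, ← mul_one (C a), ← smul_eq_C_mul, map_smul, map_smul, Ψ_one,
      h.annihilate_vacuum, smul_zero]
  | add p q hp hq => simp only [map_add, hp, hq]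
  | mul_X p j hp =>
    rw [mul_comm p, pderiv_mul, pderiv_X, map_add, Ψ_X_mul, Ψ_X_mul, hp, h.annihilate_create,
      add_comm, Pi.single_apply]
    congr 1
    simp only [@eq_comm _ j i]
    split_ifs <;> simp only [one_mul, zero_mul, map_zero]

/-- The algebraic form of the Stone–von Neumann theorem. -/
theorem exists_bijOn [Field R] [CharZero R] [AddCommGroup V] [Module R V]
    {create annihilate : σ → Module.End R V} {v : V} (h : IsBosonicVacuum create annihilate v)
    (hv : v ≠ 0) {W : Submodule R V} (hvW : v ∈ W) (hW : ∀ i, ∀ w ∈ W, create i w ∈ W)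
    (hcyclic : ∀ W' : Submodule R V, v ∈ W' → (∀ i, ∀ w ∈ W', create i w ∈ W') → W ≤ W') :
    ∃ Φ : V →ₗ[R] MvPolynomial σ R, Set.BijOn Φ W Set.univ ∧ Φ v = 1 ∧
      ∀ w ∈ W, (∀ i, Φ (annihilate i w) = pderiv i (Φ w)) ∧
        ∀ i, Φ (create i w) = X i * Φ w := by
  obtain ⟨Ψ, Ψ_one, Ψ_X_mul, Ψ_pderiv⟩ := h.exists_linearMap
  have ker_eq : LinearMap.ker Ψ = ⊥ := eq_bot_of_pderiv_mem
    (fun i p hp => by rw [LinearMap.mem_ker, Ψ_pderiv, LinearMap.mem_ker.1 hp, map_zero])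
    (by rwa [LinearMap.mem_ker, Ψ_one])
  have range_le (p) : Ψ p ∈ W := by
    induction p using MvPolynomial.induction_on with
    | C a =>
      rw [← mul_one (C a), ← smul_eq_C_mul, map_smul, Ψ_one]
      exact W.smul_mem a hvW
    | add p q hp hq => exact map_add Ψ p q ▸ W.add_mem hp hq
    | mul_X p i hp => exact mul_comm p (X i) ▸ Ψ_X_mul i p ▸ hW i _ hp
  have le_range : W ≤ LinearMap.range Ψ := by
    refine hcyclic _ ⟨1, Ψ_one⟩ ?_
    rintro i _ ⟨p, rfl⟩
    exact ⟨X i * p, Ψ_X_mul i p⟩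
  obtain ⟨Φ, hΦ⟩ := Ψ.exists_leftInverse_of_injective ker_eq
  have Φ_Ψ (p) : Φ (Ψ p) = p := LinearMap.congr_fun hΦ p
  refine ⟨Φ, ⟨Set.mapsTo_univ _ _, ?_, fun p _ => ⟨Ψ p, range_le p, Φ_Ψ p⟩⟩, ?_, ?_⟩
  · intro x hx y hy hxy
    obtain ⟨⟨p, rfl⟩, ⟨q, rfl⟩⟩ := And.intro (le_range hx) (le_range hy)
    rw [← Φ_Ψ p, ← Φ_Ψ q, hxy]
  · rw [← Ψ_one, Φ_Ψ]
  · intro w hw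
    obtain ⟨p, rfl⟩ := le_range hw
    exact ⟨fun i => by rw [← Ψ_pderiv, Φ_Ψ, Φ_Ψ], fun i => by rw [← Ψ_X_mul, Φ_Ψ, Φ_Ψ]⟩

end IsBosonicVacuum

end WeylAlgebra

section Sums

/-- The reflection `i ↦ c - i` exchanges the two parity classes when `c` is odd. -/
lemma finsum_eq_two_nsmul_of_reflection {M : Type*} [AddCommMonoid M] {F : ℤ → M}
    (hF : F.HasFiniteSupport) {c : ℤ} (hc : Odd c) (hsymm : ∀ i, F (c - i) = F i) (k : ℤ) :
    ∑ᶠ i, F i = 2 • ∑ᶠ r, F (k + 2 * r) := by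
  let g (r : ℤ) : ℤ := k + 2 * r
  have hg : Function.Injective g := fun r s hrs => by simpa [g] using hrs
  have hdisj : Disjoint (Set.range g) (Set.range fun r => c - g r) := by
    obtain ⟨d, rfl⟩ := hc
    rw [Set.disjoint_left]
    rintro _ ⟨r, rfl⟩ ⟨s, hs⟩
    simp only [g] at hs
    omega
  have hunion : Set.range g ∪ Set.range (fun r => c - g r) = Set.univ := by
    obtain ⟨d, rfl⟩ := hc
    refine Set.eq_univ_of_forall fun i => ?_
    rcases Int.even_or_odd' (i - k) with ⟨r, hr | hr⟩
    · exact .inl ⟨r, by simp only [g]; omega⟩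
    · exact .inr ⟨d - k - r, by simp only [g]; omega⟩
  rw [← finsum_mem_univ, ← hunion,
    finsum_mem_union' hdisj (hF.subset Set.inter_subset_right) (hF.subset Set.inter_subset_right),
    finsum_mem_range hg, finsum_mem_range (g := fun r => c - g r) (sub_right_injective.comp hg)]
  simp only [hsymm, g, two_nsmul]

lemma sum_range_two_mul_add_one (m : ℕ) : ∑ i ∈ Finset.range m, (2 * i + 1) = m ^ 2 := by
  induction m with
  | zero => rfl
  | succ m ih => rw [Finset.sum_range_succ, ih]; ring

lemma card_sq_le_sum_two_mul_add_one (P : Finset ℕ) : P.card ^ 2 ≤ ∑ p ∈ P, (2 * p + 1) := by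
  induction P using Finset.induction_on_max with
  | empty => simp
  | insert a P ha ih =>
    have hcard : P.card ≤ a := by
      simpa using Finset.card_le_card fun x hx => Finset.mem_range.2 (ha x hx)
    have haP : a ∉ P := fun h => lt_irrefl a (ha a h)
    rw [Finset.sum_insert haP, Finset.card_insert_of_notMem haP]
    linarith [add_sq P.card 1]

lemma eq_range_card_of_sum_two_mul_add_one_eq {P : Finset ℕ}
    (hP : ∑ p ∈ P, (2 * p + 1) = P.card ^ 2) : P = Finset.range P.card := by
  induction P using Finset.induction_on_max with
  | empty => simp
  | insert a P ha ih =>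
    have hcard : P.card ≤ a := by
      simpa using Finset.card_le_card fun x hx => Finset.mem_range.2 (ha x hx)
    have haP : a ∉ P := fun h => lt_irrefl a (ha a h)
    have hle := card_sq_le_sum_two_mul_add_one P
    rw [Finset.sum_insert haP, Finset.card_insert_of_notMem haP, add_sq] at hP
    have ha' : a = P.card := by linarith
    rw [Finset.card_insert_of_notMem haP, Finset.range_add_one, ← ih (by linarith), ← ha']

end Sums

open Filter
open scoped symmDiff

section Fermions

/-- The site of `ℕ` on which the mode `a_i` acts: `a_i` creates a particle at `i` for `0 ≤ i`
and annihilates the one at `-i - 1` for `i < 0`. -/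
def site (i : ℤ) : ℕ := (max i (-i - 1)).toNat

/-- The Jordan–Wigner sign `(-1) ^ #{s ∈ S | t < s}` of the modes acting on the site `t`. -/
def jwSign (t : ℕ) (S : Finset ℕ) : ℂ := (-1) ^ (S.filter (t < ·)).card

lemma jwSign_mul_self (t : ℕ) (S : Finset ℕ) : jwSign t S * jwSign t S = 1 := by
  rw [jwSign, ← pow_add, ← two_mul, pow_mul, neg_one_sq, one_pow]

lemma jwSign_ne_zero (t : ℕ) (S : Finset ℕ) : jwSign t S ≠ 0 :=
  left_ne_zero_of_mul_eq_one (jwSign_mul_self t S)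

lemma symmDiff_singleton_of_notMem {α : Type*} [DecidableEq α] {t : α} {S : Finset α} (ht : t ∉ S) :
    S ∆ {t} = insert t S := by
  ext s; by_cases hs : s = t <;> simp [Finset.mem_symmDiff, hs, ht]

lemma symmDiff_singleton_of_mem {α : Type*} [DecidableEq α] {t : α} {S : Finset α} (ht : t ∈ S) :
    S ∆ {t} = S.erase t := by
  ext s; by_cases hs : s = t <;> simp [Finset.mem_symmDiff, hs, ht]

lemma jwSign_symmDiff_singleton (t u : ℕ) (S : Finset ℕ) :
    jwSign t (S ∆ {u}) = if t < u then -jwSign t S else jwSign t S := by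
  have jwSign_insert {S : Finset ℕ} (hu : u ∉ S) :
      jwSign t (insert u S) = if t < u then -jwSign t S else jwSign t S := by
    simp only [jwSign, Finset.filter_insert]
    split_ifs
    · rw [Finset.card_insert_of_notMem fun h => hu (Finset.mem_filter.1 h).1, pow_succ, mul_neg_one]
    · rfl
  by_cases hu : u ∈ S
  · have h := jwSign_insert (Finset.notMem_erase u S)
    rw [Finset.insert_erase hu] at h
    rw [symmDiff_singleton_of_mem hu]
    split_ifs with htu <;> simp only [h, htu, if_true, if_false, neg_neg]
  · rw [symmDiff_singleton_of_notMem hu, jwSign_insert hu]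

lemma eD_apply (S T : Finset ℕ) : eD S T = if S = T then 1 else 0 := Finsupp.single_apply

lemma aOp_eD (i : ℤ) (S : Finset ℕ) :
    aOp i (eD S) =
      if site i ∈ S ↔ i < 0 then jwSign (site i) S • eD (S ∆ {site i}) else 0 := by
  have aOp_eq : aOp i (eD S) = aVec i S := by simp [aOp, eD]
  rw [aOp_eq, aVec]
  rcases le_or_gt 0 i with hi | hi
  · have hsite : site i = i.toNat := by rw [site]; omega
    by_cases ht : i.toNat ∈ S <;>
      simp [hsite, hi, hi.not_gt, ht, jwSign, symmDiff_singleton_of_notMem]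
  · have hsite : site i = (-i - 1).toNat := by rw [site]; omega
    by_cases ht : (-i - 1).toNat ∈ S <;>
      simp only [hsite, hi, hi.not_ge, ht, jwSign, symmDiff_singleton_of_mem, iff_true, if_true,
        if_false]

lemma aOp_apply (i : ℤ) (w : FockD) (S : Finset ℕ) :
    aOp i w S =
      if site i ∈ S ↔ 0 ≤ i then jwSign (site i) S * w (S ∆ {site i}) else 0 := by
  induction w using Finsupp.induction_linear with
  | zero => simp
  | add f g hf hg => simp only [map_add, Finsupp.add_apply, hf, hg]; split_ifs <;> ring
  | single T c =>
    have single_eq : Finsupp.single T c = c • eD T := by simp [eD]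
    rw [single_eq, map_smul, aOp_eD, Finsupp.smul_apply, Finsupp.smul_apply, eD_apply]
    by_cases hT : T = S ∆ {site i}
    · subst hT
      simp only [Finset.mem_symmDiff, Finset.mem_singleton, jwSign_symmDiff_singleton, lt_irrefl,
        symmDiff_symmDiff_cancel_right, if_true, if_false]
      by_cases hi : 0 ≤ i <;> by_cases ht : site i ∈ S <;>
        simp [hi, ht, ← not_le, eD_apply, mul_comm]
    · have hS : T ∆ {site i} ≠ S := fun h => hT (by rw [← h, symmDiff_symmDiff_cancel_right])
      split_ifs <;> simp [eD_apply, hS]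

theorem aOp_anticommutator (i j : ℤ) (w : FockD) :
    aOp i (aOp j w) + aOp j (aOp i w) = if i + j = -1 then w else 0 := by
  ext S
  simp only [Finsupp.add_apply, aOp_apply, Finset.mem_symmDiff, Finset.mem_singleton,
    jwSign_symmDiff_singleton]
  by_cases hsite : site i = site j
  · have hij : i = j ∨ i + j = -1 := by unfold site at hsite; omega
    have hsq := jwSign_mul_self (site j) S
    rcases hij with rfl | hij
    · have hii : i + i ≠ -1 := by omega
      by_cases hi : 0 ≤ i <;> by_cases ht : site i ∈ S <;> simp [hi, ht, hii]
    · have hi : 0 ≤ i ↔ ¬ 0 ≤ j := by omega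
      by_cases hj : 0 ≤ j <;> by_cases ht : site j ∈ S <;>
        simp [hsite, hij, hi, hj, ht, ← mul_assoc, hsq]
  · have hij : i + j ≠ -1 := by unfold site at hsite; omega
    rw [if_neg hij, symmDiff_right_comm S {site j}]
    simp only [hsite, Ne.symm hsite, not_false_eq_true, and_true, false_and, or_false]
    split_ifs <;> first | omega | simp <;> ring

lemma aOp_mul_comm_neg {i j : ℤ} (hij : i + j ≠ -1) (w : FockD) :
    aOp i (aOp j w) = -aOp j (aOp i w) :=
  eq_neg_of_add_eq_zero_left <| by rw [aOp_anticommutator, if_neg hij]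

lemma aOp_vacuum_of_neg {i : ℤ} (hi : i < 0) : aOp i (eD ∅) = 0 := by
  simp [aOp_eD, hi]

lemma aOp_apply_empty_of_nonneg {i : ℤ} (hi : 0 ≤ i) (w : FockD) : aOp i w ∅ = 0 := by
  simp [aOp_apply, hi]

lemma eventually_aOp_eq_zero (w : FockD) : ∀ᶠ i in atBot, aOp i w = 0 := by
  obtain ⟨N, hN⟩ := (w.support.biUnion id).bddAbove
  filter_upwards [eventually_lt_atBot (-(N : ℤ) - 1)] with i hi
  ext S
  rw [aOp_apply]
  split_ifs with hS
  · have hmem : site i ∈ S ∆ {site i} := by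
      simp [Finset.mem_symmDiff, mt hS.1 (by omega)]
    have hw : w (S ∆ {site i}) = 0 := by
      by_contra hw
      have hle := hN (Finset.mem_biUnion.2 ⟨_, Finsupp.mem_support_iff.2 hw, hmem⟩)
      unfold site at hle
      omega
    rw [hw, mul_zero, Finsupp.zero_apply]
  · rfl

@[elab_as_elim]
theorem fock_induction {P : FockD → Prop} (w : FockD) (vacuum : P (eD ∅))
    (add : ∀ u v, P u → P v → P (u + v)) (smul : ∀ (c : ℂ) u, P u → P (c • u))
    (create : ∀ (t : ℕ) u, P u → P (aOp t u)) : P w := by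
  have basis (S : Finset ℕ) : P (eD S) := by
    induction S using Finset.induction_on with
    | empty => exact vacuum
    | insert t S ht ih =>
      have hcreate : eD (insert t S) = jwSign t S • aOp t (eD S) := by
        have hsite : site t = t := by unfold site; omega
        rw [aOp_eD, hsite, if_pos (by simp [ht]), smul_smul, jwSign_mul_self, one_smul,
          symmDiff_singleton_of_notMem ht]
      exact hcreate ▸ smul _ _ (create t _ ih)
  induction w using Finsupp.induction_linear with
  | zero => exact zero_smul ℂ (eD ∅) ▸ smul 0 _ vacuum
  | add u v hu hv => exact add u v hu hv
  | single S c =>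
    have single_eq : Finsupp.single S c = c • eD S := by simp [eD]
    exact single_eq ▸ smul c _ (basis S)

lemma eq_smul_vacuum {w : FockD} (hw : ∀ i < 0, aOp i w = 0) : w = w ∅ • eD ∅ := by
  ext S
  rcases S.eq_empty_or_nonempty with rfl | ⟨t, ht⟩
  · simp [eD_apply]
  · have hsite : site (-(t : ℤ) - 1) = t := by unfold site; omega
    have hcoeff := DFunLike.congr_fun (hw (-(t : ℤ) - 1) (by omega)) (S ∆ {t})
    rw [aOp_apply, hsite, if_pos (by simp [Finset.mem_symmDiff, ht]; omega),
      symmDiff_symmDiff_cancel_right, Finsupp.zero_apply] at hcoeff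
    rw [(mul_eq_zero.1 hcoeff).resolve_left (jwSign_ne_zero _ _)]
    simp [eD_apply, (Finset.ne_empty_of_mem ht).symm]

/-- Schur's lemma for the irreducible Clifford module `FockD`. -/
theorem eq_smul_of_commute_aOp {C : FockD →ₗ[ℂ] FockD}
    (hC : ∀ i w, C (aOp i w) = aOp i (C w)) (w : FockD) : C w = C (eD ∅) ∅ • w := by
  induction w using fock_induction with
  | vacuum =>
    exact eq_smul_vacuum fun i hi => by rw [← hC, aOp_vacuum_of_neg hi, map_zero]
  | add u v hu hv => rw [map_add, hu, hv, smul_add]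
  | smul c u hu => rw [map_smul, hu, smul_comm]
  | create t u hu => rw [hC, hu, map_smul]

end Fermions

section NormalOrder

lemma NO_of_nonneg {i : ℤ} (hi : 0 ≤ i) (j : ℤ) (w : FockD) : NO i j w = aOp i (aOp j w) := by
  simp [NO, hi]

lemma NO_of_neg {i : ℤ} (hi : i < 0) (j : ℤ) (w : FockD) : NO i j w = -aOp j (aOp i w) := by
  simp [NO, hi.not_ge]

lemma NO_eq_sub (i j : ℤ) (w : FockD) :
    NO i j w = aOp i (aOp j w) - if i < 0 ∧ i + j = -1 then w else 0 := by
  rcases le_or_gt 0 i with hi | hi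
  · simp [NO_of_nonneg hi, hi.not_gt]
  · simp [NO_of_neg hi, hi, ← aOp_anticommutator i j w]

lemma NO_swap (i j : ℤ) (w : FockD) : NO j i w = -NO i j w := by
  rcases le_or_gt 0 i with hi | hi <;> rcases le_or_gt 0 j with hj | hj
  · rw [NO_of_nonneg hi, NO_of_nonneg hj, aOp_mul_comm_neg (by omega)]
  · rw [NO_of_nonneg hi, NO_of_neg hj]
  · rw [NO_of_nonneg hj, NO_of_neg hi, neg_neg]
  · rw [NO_of_neg hi, NO_of_neg hj, aOp_mul_comm_neg (by omega)]

lemma NO_eq_zero_of_left {i j : ℤ} {w : FockD} (hi : i < 0) (hw : aOp i w = 0) :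
    NO i j w = 0 := by
  rw [NO_of_neg hi, hw, map_zero, neg_zero]

lemma NO_eq_zero_of_right {i j : ℤ} {w : FockD} (hj : j < 0) (hw : aOp j w = 0) :
    NO i j w = 0 := by
  rw [NO_swap, NO_eq_zero_of_left hj hw, neg_zero]

lemma NO_vacuum_apply_empty (i j : ℤ) : NO i j (eD ∅) ∅ = 0 := by
  rcases lt_or_ge i 0 with hi | hi
  · rw [NO_eq_zero_of_left hi (aOp_vacuum_of_neg hi), Finsupp.zero_apply]
  · rw [NO_of_nonneg hi, aOp_apply_empty_of_nonneg hi]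

lemma NO_aOp (i j k : ℤ) (w : FockD) :
    NO i j (aOp k w) = aOp k (NO i j w) + (if j + k = -1 then aOp i w else 0)
      - if i + k = -1 then aOp j w else 0 := by
  have hj : aOp j (aOp k w) = (if j + k = -1 then w else 0) - aOp k (aOp j w) :=
    eq_sub_of_add_eq (aOp_anticommutator j k w)
  have hi : aOp i (aOp k (aOp j w)) =
      (if i + k = -1 then aOp j w else 0) - aOp k (aOp i (aOp j w)) :=
    eq_sub_of_add_eq (aOp_anticommutator i k (aOp j w))
  simp only [NO_eq_sub, hj, map_sub, hi, apply_ite (aOp _), map_zero]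
  abel

lemma hasFiniteSupport_NO (c : ℤ) (w : FockD) :
    Function.HasFiniteSupport fun i => NO i (c - i) w := by
  obtain ⟨N, hN⟩ := eventually_atBot.1 ((eventually_aOp_eq_zero w).and (eventually_lt_atBot 0))
  refine (Set.finite_Ioo N (c - N)).subset fun i hi => ?_
  by_contra hmem
  rcases le_or_gt i N with h | h
  · exact hi (NO_eq_zero_of_left (hN i h).2 (hN i h).1)
  · have h' : c - i ≤ N := by rw [Set.mem_Ioo] at hmem; omega
    exact hi (NO_eq_zero_of_right (hN _ h').2 (hN _ h').1)

end NormalOrder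

section Heisenberg

/-- The sign `(-1) ^ (k + 1)` of the `k`-th summand of the Heisenberg operators, which is also
the charge carried by the mode `a_k`. -/
def modeSign (k : ℤ) : ℂ := (-1) ^ (k + 1)

lemma modeSign_mul_self (k : ℤ) : modeSign k * modeSign k = 1 := by
  rw [modeSign, ← zpow_add₀ (by norm_num), Even.neg_one_zpow ⟨_, rfl⟩]

lemma modeSign_of_even {k : ℤ} (hk : Even k) : modeSign k = -1 := hk.add_one.neg_one_zpow

lemma modeSign_of_odd {k : ℤ} (hk : Odd k) : modeSign k = 1 := hk.add_one.neg_one_zpow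

lemma modeSign_add_of_even (k : ℤ) {l : ℤ} (hl : Even l) : modeSign (k + l) = modeSign k := by
  rw [modeSign, add_right_comm, zpow_add₀ (by norm_num), hl.neg_one_zpow, mul_one, modeSign]

lemma modeSign_sub_of_odd {c : ℤ} (hc : Odd c) (k : ℤ) : modeSign (c - k) = -modeSign k := by
  rcases Int.even_or_odd k with hk | hk
  · rw [modeSign_of_odd (hc.sub_even hk), modeSign_of_even hk, neg_neg]
  · rw [modeSign_of_even (hc.sub_odd hk), modeSign_of_odd hk]

lemma hasFiniteSupport_modeSign_smul_NO (c : ℤ) (w : FockD) :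
    Function.HasFiniteSupport fun i => modeSign i • NO i (c - i) w :=
  (hasFiniteSupport_NO c w).smul_right modeSign

/-- The Heisenberg operator `h_n` as a linear endomorphism. -/
def heisenberg (n : ℤ) : FockD →ₗ[ℂ] FockD where
  toFun := hD n
  map_add' u v := by
    have hfin := hasFiniteSupport_modeSign_smul_NO (-2 * n - 1)
    simp only [hD, map_add, smul_add]
    exact (congrArg _ (finsum_add_distrib (hfin u) (hfin v))).trans (smul_add _ _ _)
  map_smul' c w := by
    simp only [hD, map_smul, RingHom.id_apply, smul_comm _ c, ← smul_finsum]

lemma coe_heisenberg (n : ℤ) : ⇑(heisenberg n) = hD n := rfl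

lemma heisenberg_apply (n : ℤ) (w : FockD) :
    heisenberg n w = (1 / 2 : ℂ) • ∑ᶠ i : ℤ, modeSign i • NO i (-2 * n - 1 - i) w := rfl

lemma hasFiniteSupport_NO_add_two_mul (c k : ℤ) (w : FockD) :
    Function.HasFiniteSupport fun r => NO (k + 2 * r) (c - (k + 2 * r)) w :=
  (hasFiniteSupport_NO c w).fun_comp_of_injective fun r s hrs => by simpa using hrs

/-- The two parity classes of `i` contribute equally to `h_n`. -/
lemma heisenberg_eq_finsum (n k : ℤ) (w : FockD) :
    heisenberg n w =
      modeSign k • ∑ᶠ r, NO (k + 2 * r) (-2 * n - 1 - (k + 2 * r)) w := by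
  have hodd : Odd (-2 * n - 1) := ⟨-n - 1, by ring⟩
  have symmetric (i : ℤ) :
      modeSign (-2 * n - 1 - i) • NO (-2 * n - 1 - i) (-2 * n - 1 - (-2 * n - 1 - i)) w =
        modeSign i • NO i (-2 * n - 1 - i) w := by
    rw [modeSign_sub_of_odd hodd, sub_sub_cancel, NO_swap, smul_neg, neg_smul, neg_neg]
  rw [heisenberg_apply, finsum_eq_two_nsmul_of_reflection
    (hasFiniteSupport_modeSign_smul_NO (-2 * n - 1) w) hodd symmetric k,
    ← Nat.cast_smul_eq_nsmul ℂ, smul_smul, smul_finsum]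
  norm_num [modeSign_add_of_even, smul_finsum]

theorem heisenberg_aOp (n k : ℤ) (w : FockD) :
    heisenberg n (aOp k w) = aOp k (heisenberg n w) + modeSign k • aOp (k - 2 * n) w := by
  have commutator (r : ℤ) : NO (k + 2 * r) (-2 * n - 1 - (k + 2 * r)) (aOp k w) =
      aOp k (NO (k + 2 * r) (-2 * n - 1 - (k + 2 * r)) w) +
        if r = -n then aOp (k - 2 * n) w else 0 := by
    have h : ¬k + 2 * r + k = -1 := by omega
    have h' : -2 * n - 1 - (k + 2 * r) + k = -1 ↔ r = -n := by omega
    simp only [NO_aOp, h, h', if_false, sub_zero]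
    congr 1
    split_ifs with hr
    · rw [hr]; ring_nf
    · rfl
  have hfin := hasFiniteSupport_NO_add_two_mul (-2 * n - 1) k w
  rw [heisenberg_eq_finsum n k, heisenberg_eq_finsum n k, map_smul, map_finsum _ hfin, ← smul_add,
    finsum_congr commutator, finsum_add_distrib,
    finsum_eq_single _ (-n) fun r hr => if_neg hr, if_pos rfl]
  · exact hfin.fun_comp (map_zero (aOp k))
  · exact (Set.finite_singleton (-n)).subset fun r hr => (ite_ne_right_iff.1 hr).1

lemma heisenberg_eq_zero {n : ℤ} (hn : 0 ≤ n) {w : FockD} (hw : ∀ i ≤ -n - 1, aOp i w = 0) :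
    heisenberg n w = 0 := by
  have summand_eq_zero (i : ℤ) : modeSign i • NO i (-2 * n - 1 - i) w = 0 := by
    rcases le_or_gt i (-n - 1) with hi | hi
    · rw [NO_eq_zero_of_left (by omega) (hw i hi), smul_zero]
    · rw [NO_eq_zero_of_right (by omega) (hw _ (by omega)), smul_zero]
  simp only [heisenberg_apply, summand_eq_zero, finsum_zero, smul_zero]

lemma heisenberg_vacuum_of_nonneg {n : ℤ} (hn : 0 ≤ n) : heisenberg n (eD ∅) = 0 :=
  heisenberg_eq_zero hn fun _ hi => aOp_vacuum_of_neg (by omega)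

lemma eventually_heisenberg_eq_zero (w : FockD) : ∀ᶠ n in atTop, heisenberg n w = 0 := by
  obtain ⟨N, hN⟩ := eventually_atBot.1 (eventually_aOp_eq_zero w)
  filter_upwards [eventually_ge_atTop 0, eventually_ge_atTop (-N - 1)] with n hn hnN
  exact heisenberg_eq_zero hn fun i hi => hN i (by omega)

lemma heisenberg_vacuum_apply_empty (n : ℤ) : heisenberg n (eD ∅) ∅ = 0 := by
  rw [heisenberg_apply, Finsupp.smul_apply, ← Finsupp.lapply_apply (R := ℂ) (∅ : Finset ℕ),
    map_finsum _ (hasFiniteSupport_modeSign_smul_NO _ _)]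
  simp [NO_vacuum_apply_empty]

end Heisenberg

section Grading

/-- The operator with eigenvector `e_S` of eigenvalue `∑ s ∈ S, g s` for every `S`: it counts the
particles with weight `g`. -/
def weightedNumber (g : ℤ → ℂ) : FockD →ₗ[ℂ] FockD :=
  Finsupp.lsum ℂ fun S => LinearMap.toSpanSingleton ℂ FockD ((∑ s ∈ S, g s) • eD S)

lemma weightedNumber_eD (g : ℤ → ℂ) (S : Finset ℕ) :
    weightedNumber g (eD S) = (∑ s ∈ S, g s) • eD S := by
  simp [weightedNumber, eD]

lemma weightedNumber_apply (g : ℤ → ℂ) (w : FockD) (S : Finset ℕ) :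
    weightedNumber g w S = (∑ s ∈ S, g s) * w S := by
  induction w using Finsupp.induction_linear with
  | zero => simp
  | add u v hu hv => simp only [map_add, Finsupp.add_apply, hu, hv, mul_add]
  | single T c =>
    have single_eq : Finsupp.single T c = c • eD T := by simp [eD]
    rw [single_eq, map_smul, weightedNumber_eD]
    by_cases hT : T = S <;> simp [eD_apply, hT, mul_comm]

lemma weightedNumber_aOp {g : ℤ → ℂ} {k : ℤ} (hg : g (-k - 1) = -g k) (w : FockD) :
    weightedNumber g (aOp k w) = aOp k (weightedNumber g w) + g k • aOp k w := by
  ext S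
  simp only [Finsupp.add_apply, Finsupp.smul_apply, weightedNumber_apply, aOp_apply, smul_eq_mul]
  split_ifs with hS
  · have weight_eq : ∑ s ∈ S, g s = ∑ s ∈ S ∆ {site k}, g s + g k := by
      by_cases hk : 0 ≤ k
      · have hsite : (site k : ℤ) = k := by unfold site; omega
        have hmem := hS.2 hk
        rw [symmDiff_singleton_of_mem hmem, ← Finset.sum_erase_add _ _ hmem, hsite]
      · have hsite : (site k : ℤ) = -k - 1 := by unfold site; omega
        have hmem := mt hS.1 hk
        rw [symmDiff_singleton_of_notMem hmem, Finset.sum_insert hmem, hsite, hg]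
        ring
    rw [weight_eq]
    ring
  · simp

lemma heisenberg_zero_eq_weightedNumber : heisenberg 0 = weightedNumber modeSign := by
  have hsign (k : ℤ) : modeSign (-k - 1) = -modeSign k := by
    simpa [sub_eq_add_neg, add_comm] using modeSign_sub_of_odd (c := -1) (by decide) k
  have commute (k : ℤ) (w : FockD) : (heisenberg 0 - weightedNumber modeSign) (aOp k w) =
      aOp k ((heisenberg 0 - weightedNumber modeSign) w) := by
    simp only [LinearMap.sub_apply, heisenberg_aOp, weightedNumber_aOp (hsign k), map_sub, mul_zero,
      sub_zero]
    abel
  refine LinearMap.ext fun w => ?_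
  have h := eq_smul_of_commute_aOp commute w
  simpa [heisenberg_vacuum_apply_empty, weightedNumber_apply, sub_eq_zero] using h

/-- Twice the energy of the mode `a_k`. -/
def modeEnergy (k : ℤ) : ℂ := (2 * (k / 2) + 1 : ℤ)

lemma modeEnergy_neg_sub_one (k : ℤ) : modeEnergy (-k - 1) = -modeEnergy k := by
  unfold modeEnergy
  exact_mod_cast (by omega : 2 * ((-k - 1) / 2) + 1 = -(2 * (k / 2) + 1))

lemma modeEnergy_sub_two_mul (k n : ℤ) : modeEnergy (k - 2 * n) = modeEnergy k - 2 * n := by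
  unfold modeEnergy
  exact_mod_cast (by omega : 2 * ((k - 2 * n) / 2) + 1 = 2 * (k / 2) + 1 - 2 * n)

/-- The energy operator `2 L_0`. -/
def energyOp : FockD →ₗ[ℂ] FockD := weightedNumber modeEnergy

lemma energyOp_aOp (k : ℤ) (w : FockD) :
    energyOp (aOp k w) = aOp k (energyOp w) + modeEnergy k • aOp k w :=
  weightedNumber_aOp (modeEnergy_neg_sub_one k) w

lemma energyOp_vacuum : energyOp (eD ∅) = 0 := by
  simp [energyOp, weightedNumber_eD]

lemma energyOp_apply_empty (w : FockD) : energyOp w ∅ = 0 := by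
  simp [energyOp, weightedNumber_apply]

theorem energyOp_heisenberg (n : ℤ) (w : FockD) :
    energyOp (heisenberg n w) = heisenberg n (energyOp w) - (2 * n : ℂ) • heisenberg n w := by
  let defect := energyOp ∘ₗ heisenberg n - heisenberg n ∘ₗ energyOp + (2 * n : ℂ) • heisenberg n
  have commute (k : ℤ) (u : FockD) : defect (aOp k u) = aOp k (defect u) := by
    simp only [defect, LinearMap.add_apply, LinearMap.sub_apply, LinearMap.comp_apply,
      LinearMap.smul_apply, energyOp_aOp, heisenberg_aOp, modeEnergy_sub_two_mul, map_add, map_sub,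
      map_smul]
    module
  have h := eq_smul_of_commute_aOp commute w
  have hvac : defect (eD ∅) ∅ = 0 := by
    simp [defect, energyOp_vacuum, energyOp_apply_empty, heisenberg_vacuum_apply_empty]
  rw [hvac, zero_smul] at h
  rw [← sub_eq_zero, ← h]
  simp only [defect, LinearMap.add_apply, LinearMap.sub_apply, LinearMap.comp_apply,
    LinearMap.smul_apply]
  abel

end Grading

section HeisenbergRelations

lemma heisenberg_commutator_eq_smul (m n : ℤ) (w : FockD) :
    heisenberg m (heisenberg n w) - heisenberg n (heisenberg m w) =
      (heisenberg m (heisenberg n (eD ∅)) - heisenberg n (heisenberg m (eD ∅))) ∅ • w := by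
  have commute (k : ℤ) (u : FockD) :
      (heisenberg m ∘ₗ heisenberg n - heisenberg n ∘ₗ heisenberg m) (aOp k u) =
        aOp k ((heisenberg m ∘ₗ heisenberg n - heisenberg n ∘ₗ heisenberg m) u) := by
    have hmn : modeSign (k - 2 * n) = modeSign k := by
      rw [sub_eq_add_neg, modeSign_add_of_even _ (by simp)]
    have hnm : modeSign (k - 2 * m) = modeSign k := by
      rw [sub_eq_add_neg, modeSign_add_of_even _ (by simp)]
    simp only [LinearMap.sub_apply, LinearMap.comp_apply, heisenberg_aOp, map_add, map_sub,
      map_smul, hmn, hnm, sub_right_comm k (2 * n)]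
    module
  simpa using eq_smul_of_commute_aOp commute w

lemma heisenberg_commute_of_add_ne_zero {m n : ℤ} (hmn : m + n ≠ 0) (w : FockD) :
    heisenberg m (heisenberg n w) = heisenberg n (heisenberg m w) := by
  set c := (heisenberg m (heisenberg n (eD ∅)) - heisenberg n (heisenberg m (eD ∅))) ∅
  have hw (u : FockD) :
      heisenberg m (heisenberg n u) - heisenberg n (heisenberg m u) = c • u :=
    heisenberg_commutator_eq_smul m n u
  have energy_eq :
      energyOp (heisenberg m (heisenberg n (eD ∅)) - heisenberg n (heisenberg m (eD ∅))) =
        -(2 * (m + n : ℂ)) •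
          (heisenberg m (heisenberg n (eD ∅)) - heisenberg n (heisenberg m (eD ∅))) := by
    simp only [map_sub, energyOp_heisenberg, energyOp_vacuum, map_zero, map_smul]
    module
  have hc : (2 * (m + n : ℂ)) * c = 0 := by
    have h := DFunLike.congr_fun energy_eq ∅
    rw [energyOp_apply_empty, Finsupp.smul_apply, smul_eq_mul] at h
    linear_combination h
  have hne : 2 * (m + n : ℂ) ≠ 0 := mul_ne_zero two_ne_zero (by exact_mod_cast hmn)
  rw [← sub_eq_zero, hw, (mul_eq_zero.1 hc).resolve_left hne, zero_smul]

lemma heisenberg_neg_vacuum (m : ℕ) :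
    heisenberg (-m) (eD ∅) =
      ∑ r ∈ Finset.range m, aOp (2 * r + 1) (aOp (2 * (m - 1 - r)) (eD ∅)) := by
  have support_subset : Function.support
      (fun r : ℤ => NO (1 + 2 * r) (-2 * -m - 1 - (1 + 2 * r)) (eD ∅)) ⊆
        ((Finset.range m).map (Nat.castEmbedding (R := ℤ)) : Set ℤ) := by
    intro r hr
    have left_nonneg : 0 ≤ 1 + 2 * r := by
      by_contra! h
      exact hr (NO_eq_zero_of_left h (aOp_vacuum_of_neg h))
    have right_nonneg : 0 ≤ -2 * -m - 1 - (1 + 2 * r) := by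
      by_contra! h
      exact hr (NO_eq_zero_of_right h (aOp_vacuum_of_neg h))
    exact Finset.mem_coe.2 (Finset.mem_map.2
      ⟨r.toNat, Finset.mem_range.2 (by omega), by simp; omega⟩)
  rw [heisenberg_eq_finsum _ 1, finsum_eq_sum_of_support_subset _ support_subset, Finset.sum_map,
    modeSign_of_odd odd_one, one_smul]
  refine Finset.sum_congr rfl fun r _ => ?_
  rw [Nat.castEmbedding_apply, NO_of_nonneg (by omega)]
  ring_nf

lemma heisenberg_heisenberg_neg_vacuum (m : ℕ) :
    heisenberg m (heisenberg (-m) (eD ∅)) = (m : ℂ) • eD ∅ := by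
  have pair (r : ℕ) (hr : r ∈ Finset.range m) :
      heisenberg m (aOp (2 * r + 1) (aOp (2 * (m - 1 - r)) (eD ∅))) = eD ∅ := by
    rw [Finset.mem_range] at hr
    have anticommutator := aOp_anticommutator (2 * r + 1 - 2 * m) (2 * (m - 1 - r)) (eD ∅)
    rw [if_pos (by ring), aOp_vacuum_of_neg (i := 2 * r + 1 - 2 * m) (by omega), map_zero,
      add_zero] at anticommutator
    rw [heisenberg_aOp, heisenberg_aOp, heisenberg_vacuum_of_nonneg (by omega),
      aOp_vacuum_of_neg (by omega), anticommutator, modeSign_of_odd ⟨r, rfl⟩]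
    simp
  rw [heisenberg_neg_vacuum, map_sum, Finset.sum_congr rfl pair, Finset.sum_const,
    Finset.card_range, Nat.cast_smul_eq_nsmul]

theorem heisenberg_commutator (m n : ℤ) (w : FockD) :
    heisenberg m (heisenberg n w) =
      heisenberg n (heisenberg m w) + if m + n = 0 then (m : ℂ) • w else 0 := by
  split_ifs with hmn
  · obtain rfl : n = -m := by omega
    have nonneg_case (l : ℕ) (u : FockD) : heisenberg l (heisenberg (-l) u) -
        heisenberg (-l) (heisenberg l u) = (l : ℂ) • u := by
      rw [heisenberg_commutator_eq_smul, heisenberg_heisenberg_neg_vacuum,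
        heisenberg_vacuum_of_nonneg (by omega)]
      simp [eD_apply]
    obtain ⟨l, rfl | rfl⟩ := m.eq_nat_or_neg
    · exact sub_eq_iff_eq_add'.1 (nonneg_case l w)
    · have h := nonneg_case l w
      rw [neg_neg, ← sub_eq_iff_eq_add', ← neg_sub, h]
      push_cast
      rw [neg_smul]
  · rw [heisenberg_commute_of_add_ne_zero hmn, add_zero]

end HeisenbergRelations

section Sugawara

lemma sum_sum_aOp_aOp_aOp_eq_zero (I : Finset ℤ) (k : ℤ) (w : FockD) :
    ∑ x ∈ I, ∑ r ∈ I, aOp (k + 2 * x) (aOp (k + 2 * r) (aOp (-2 * x - 1 - (k + 2 * r)) w)) = 0 := by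
  refine self_eq_neg.1 (Finset.sum_comm.trans ?_)
  simp only [← Finset.sum_neg_distrib]
  refine Finset.sum_congr rfl fun x _ => Finset.sum_congr rfl fun r _ => ?_
  rw [aOp_mul_comm_neg (by omega)]
  ring_nf

lemma card_filter_add_two_mul_neg {k : ℤ} {M : ℕ} (hk : k.natAbs ≤ M) :
    (((Finset.Icc (-M : ℤ) (2 * M)).filter (k + 2 * · < 0)).card : ℂ) = M - (k / 2 : ℤ) := by
  have hfilter : (Finset.Icc (-M : ℤ) (2 * M)).filter (k + 2 * · < 0) =
      Finset.Ico (-M : ℤ) (-(k / 2)) := by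
    ext r
    simp only [Finset.mem_filter, Finset.mem_Icc, Finset.mem_Ico]
    omega
  rw [hfilter, Int.card_Ico]
  have hcard : ((-(k / 2) - -(M : ℤ)).toNat : ℤ) = M - k / 2 := by omega
  exact_mod_cast hcard

/-- The cubic terms cancel in pairs, so only the normal ordering constants survive. -/
lemma sum_sum_aOp_NO {k : ℤ} {M : ℕ} (hk : k.natAbs ≤ M) (w : FockD) :
    ∑ x ∈ Finset.Icc (-M : ℤ) (2 * M), ∑ r ∈ Finset.Icc (-M : ℤ) (2 * M),
        aOp (k + 2 * x) (NO (k + 2 * r) (-2 * x - 1 - (k + 2 * r)) w) =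
      ((k / 2 : ℤ) - M : ℂ) • aOp k w := by
  have summand_eq (x r : ℤ) :
      aOp (k + 2 * x) (NO (k + 2 * r) (-2 * x - 1 - (k + 2 * r)) w) =
        aOp (k + 2 * x) (aOp (k + 2 * r) (aOp (-2 * x - 1 - (k + 2 * r)) w)) -
          if x = 0 then if k + 2 * r < 0 then aOp k w else 0 else 0 := by
    have hx : k + 2 * r + (-2 * x - 1 - (k + 2 * r)) = -1 ↔ x = 0 := by omega
    simp only [NO_eq_sub, map_sub, hx]
    by_cases hx : x = 0 <;> by_cases hr : k + 2 * r < 0 <;> simp [hx, hr]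
  simp only [summand_eq, Finset.sum_sub_distrib]
  rw [sum_sum_aOp_aOp_aOp_eq_zero, zero_sub,
    Finset.sum_eq_single_of_mem 0 (by simp) fun x _ hx => by simp [hx]]
  simp only [if_true]
  rw [← Finset.sum_filter, Finset.sum_const, ← Nat.cast_smul_eq_nsmul ℂ,
    card_filter_add_two_mul_neg hk]
  module

lemma eventually_sum_aOp_heisenberg (k : ℤ) (w : FockD) :
    ∀ᶠ M : ℕ in atTop, ∑ x ∈ Finset.Icc (-M : ℤ) M, aOp (k + 2 * x) (heisenberg x w) =
      (modeSign k * ((k / 2 : ℤ) - M)) • aOp k w := by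
  obtain ⟨N, hN⟩ := eventually_atBot.1 (eventually_aOp_eq_zero w)
  obtain ⟨N', hN'⟩ := eventually_atTop.1 (eventually_heisenberg_eq_zero w)
  filter_upwards [eventually_ge_atTop (k.natAbs + N.natAbs + N'.natAbs)] with M hM
  have heisenberg_eq_sum {x : ℤ} (hx : x ∈ Finset.Icc (-M : ℤ) (2 * M)) :
      heisenberg x w = modeSign k • ∑ r ∈ Finset.Icc (-M : ℤ) (2 * M),
        NO (k + 2 * r) (-2 * x - 1 - (k + 2 * r)) w := by
    rw [heisenberg_eq_finsum x k, finsum_eq_sum_of_support_subset]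
    intro r hr
    rw [Finset.mem_Icc] at hx
    rw [Finset.mem_coe, Finset.mem_Icc]
    by_contra hr'
    rcases lt_or_ge r (-M) with h | h
    · exact hr (NO_eq_zero_of_left (by omega) (hN _ (by omega)))
    · exact hr (NO_eq_zero_of_right (by omega) (hN _ (by omega)))
  have extend : ∑ x ∈ Finset.Icc (-M : ℤ) M, aOp (k + 2 * x) (heisenberg x w) =
      ∑ x ∈ Finset.Icc (-M : ℤ) (2 * M), aOp (k + 2 * x) (heisenberg x w) := by
    refine Finset.sum_subset (Finset.Icc_subset_Icc_right (by omega)) fun x hx hx' => ?_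
    rw [Finset.mem_Icc] at hx hx'
    rw [hN' x (by omega), map_zero]
  rw [extend, mul_smul, ← sum_sum_aOp_NO (by omega) w, Finset.smul_sum]
  refine Finset.sum_congr rfl fun x hx => ?_
  rw [heisenberg_eq_sum hx, map_smul, map_sum]

lemma heisenberg_neg_heisenberg_aOp (x k : ℤ) (w : FockD) :
    heisenberg (-x) (heisenberg x (aOp k w)) =
      aOp k (heisenberg (-x) (heisenberg x w)) + aOp k w +
        modeSign k • (aOp (k + 2 * x) (heisenberg x w) +
          aOp (k + 2 * -x) (heisenberg (-x) w)) := by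
  have hsign : modeSign (k - 2 * x) = modeSign k := by
    rw [sub_eq_add_neg, modeSign_add_of_even _ (by simp)]
  simp only [heisenberg_aOp, map_add, map_smul, hsign, smul_add, smul_smul, modeSign_mul_self]
  ring_nf
  module

/-- The truncation of `2 L¹_0 = h_0² + 2 ∑_{m ≥ 1} h_{-m} h_m` to `m ≤ M`. -/
def sugawaraOp (M : ℕ) : FockD →ₗ[ℂ] FockD :=
  heisenberg 0 ∘ₗ heisenberg 0 +
    (2 : ℂ) • ∑ m ∈ Finset.range M, heisenberg (-(m + 1)) ∘ₗ heisenberg (m + 1)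

lemma sugawaraOp_apply (M : ℕ) (w : FockD) : sugawaraOp M w =
    heisenberg 0 (heisenberg 0 w) +
      (2 : ℂ) • ∑ m ∈ Finset.range M, heisenberg (-(m + 1)) (heisenberg (m + 1) w) := by
  simp [sugawaraOp]

lemma sum_Icc_heisenberg_neg_heisenberg (M : ℕ) (w : FockD) :
    ∑ x ∈ Finset.Icc (-M : ℤ) M, heisenberg (-x) (heisenberg x w) =
      sugawaraOp M w + (M * (M + 1) / 2 : ℂ) • w := by
  induction M with
  | zero => simp [sugawaraOp_apply]
  | succ M ih =>
    have commutator : heisenberg (M + 1) (heisenberg (-(M + 1)) w) =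
        heisenberg (-(M + 1)) (heisenberg (M + 1) w) + (M + 1 : ℂ) • w := by
      rw [heisenberg_commutator, if_pos (by ring)]
      push_cast
      rfl
    have hIcc : Finset.Icc (-(M + 1 : ℕ) : ℤ) (M + 1 : ℕ) =
        insert (M + 1 : ℤ) (insert (-(M + 1) : ℤ) (Finset.Icc (-M : ℤ) M)) := by
      ext x
      simp only [Finset.mem_Icc, Finset.mem_insert]
      omega
    rw [hIcc, Finset.sum_insert (by simp; omega), Finset.sum_insert (by simp), ih, neg_neg,
      commutator]
    simp only [sugawaraOp_apply, Finset.sum_range_succ]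
    push_cast
    module

lemma eventually_sugawaraOp_aOp (k : ℤ) (w : FockD) :
    ∀ᶠ M : ℕ in atTop,
      sugawaraOp M (aOp k w) = aOp k (sugawaraOp M w) + modeEnergy k • aOp k w := by
  filter_upwards [eventually_sum_aOp_heisenberg k w] with M hM
  have reflect : ∑ x ∈ Finset.Icc (-M : ℤ) M, aOp (k + 2 * -x) (heisenberg (-x) w) =
      ∑ x ∈ Finset.Icc (-M : ℤ) M, aOp (k + 2 * x) (heisenberg x w) :=
    Finset.sum_equiv (Equiv.neg ℤ) (by simp [and_comm, neg_le]) fun _ _ => rfl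
  have hcard : ((Finset.Icc (-M : ℤ) M).card : ℂ) = 2 * M + 1 := by
    rw [Int.card_Icc]
    exact_mod_cast (by omega : ((M : ℤ) + 1 - -M).toNat = 2 * M + 1)
  have h := sum_Icc_heisenberg_neg_heisenberg M (aOp k w)
  simp only [heisenberg_neg_heisenberg_aOp, Finset.sum_add_distrib, ← map_sum,
    ← Finset.smul_sum, reflect, hM, Finset.sum_const, ← Nat.cast_smul_eq_nsmul ℂ, hcard,
    sum_Icc_heisenberg_neg_heisenberg, map_add, map_smul, smul_add, smul_smul,
    ← mul_assoc, modeSign_mul_self, one_mul] at h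
  have hE : modeEnergy k = 2 * (k / 2 : ℤ) + 1 := by simp [modeEnergy]
  rw [hE]
  linear_combination (norm := module) -h

theorem eventually_sugawaraOp_eq_energyOp (w : FockD) :
    ∀ᶠ M : ℕ in atTop, sugawaraOp M w = energyOp w := by
  induction w using fock_induction with
  | vacuum =>
    refine Eventually.of_forall fun M => ?_
    have hpos (m : ℕ) : heisenberg (m + 1) (eD ∅) = 0 := heisenberg_vacuum_of_nonneg (by omega)
    simp [sugawaraOp_apply, hpos, heisenberg_vacuum_of_nonneg, energyOp_vacuum]
  | add u v hu hv => filter_upwards [hu, hv] with M hu hv using by rw [map_add, map_add, hu, hv]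
  | smul c u hu => filter_upwards [hu] with M hu using by rw [map_smul, map_smul, hu]
  | create t u hu =>
    filter_upwards [hu, eventually_sugawaraOp_aOp t u] with M hu haOp
    rw [haOp, hu, energyOp_aOp]

end Sugawara

section ChargeAndEnergy

/-- The set of sites consisting of `2 * p` for `p ∈ V` and `2 * p + 1` for `p ∈ O`. -/
def ofParts (V O : Finset ℕ) : Finset ℕ :=
  (V.disjSum O).map Equiv.natSumNatEquivNat.toEmbedding

lemma exists_eq_ofParts (S : Finset ℕ) : ∃ V O, S = ofParts V O := by
  let T := Equiv.natSumNatEquivNat.finsetCongr.symm S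
  refine ⟨T.toLeft, T.toRight, ?_⟩
  rw [ofParts, Finset.toLeft_disjSum_toRight]
  exact (Equiv.natSumNatEquivNat.finsetCongr.apply_symm_apply S).symm

lemma sum_ofParts {M : Type*} [AddCommMonoid M] (V O : Finset ℕ) (f : ℕ → M) :
    ∑ s ∈ ofParts V O, f s = ∑ p ∈ V, f (2 * p) + ∑ p ∈ O, f (2 * p + 1) := by
  simp [ofParts, Finset.sum_map, Finset.sum_disjSum]

lemma vSet_eq_ofParts (n : ℤ) :
    vSet n = ofParts (Finset.range (-n).toNat) (Finset.range n.toNat) := by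
  rw [vSet]
  split_ifs with hn
  · rw [Int.toNat_of_nonpos (neg_nonpos.2 hn), ofParts, Finset.range_zero, Finset.empty_disjSum,
      Finset.map_map, Finset.map_eq_image]
    rfl
  · rw [Int.toNat_of_nonpos (not_le.1 hn).le, ofParts, Finset.range_zero, Finset.disjSum_empty,
      Finset.map_map, Finset.map_eq_image]
    rfl

lemma chg_ofParts (V O : Finset ℕ) : chg (ofParts V O) = O.card - V.card := by
  rw [chg, Finset.card_filter, Finset.card_filter, sum_ofParts, sum_ofParts]
  simp

lemma chg_vSet (n : ℤ) : chg (vSet n) = n := by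
  rw [vSet_eq_ofParts, chg_ofParts, Finset.card_range, Finset.card_range]
  omega

/-- Twice the energy of the basis vector `e_S`. -/
def energy (S : Finset ℕ) : ℕ := ∑ s ∈ S, (2 * (s / 2) + 1)

lemma energy_ofParts (V O : Finset ℕ) :
    energy (ofParts V O) = ∑ p ∈ V, (2 * p + 1) + ∑ p ∈ O, (2 * p + 1) := by
  rw [energy, sum_ofParts]
  congr! 3
  all_goals omega

lemma energy_vSet (n : ℤ) : (energy (vSet n) : ℤ) = n ^ 2 := by
  rw [vSet_eq_ofParts, energy_ofParts, sum_range_two_mul_add_one, sum_range_two_mul_add_one]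
  rcases le_total 0 n with hn | hn <;> simp [hn]

lemma card_sq_add_card_sq_le_energy (V O : Finset ℕ) :
    V.card ^ 2 + O.card ^ 2 ≤ energy (ofParts V O) := by
  rw [energy_ofParts]
  exact add_le_add (card_sq_le_sum_two_mul_add_one V) (card_sq_le_sum_two_mul_add_one O)

lemma chg_sq_le_energy (S : Finset ℕ) : chg S ^ 2 ≤ energy S := by
  obtain ⟨V, O, rfl⟩ := exists_eq_ofParts S
  have h : (V.card ^ 2 + O.card ^ 2 : ℤ) ≤ energy (ofParts V O) := by
    exact_mod_cast card_sq_add_card_sq_le_energy V O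
  rw [chg_ofParts]
  nlinarith [mul_nonneg V.card.cast_nonneg (α := ℤ) O.card.cast_nonneg]

lemma eq_vSet_of_energy_eq {S : Finset ℕ} (hS : (energy S : ℤ) = chg S ^ 2) :
    S = vSet (chg S) := by
  obtain ⟨V, O, rfl⟩ := exists_eq_ofParts S
  have hle : (V.card ^ 2 + O.card ^ 2 : ℤ) ≤ energy (ofParts V O) := by
    exact_mod_cast card_sq_add_card_sq_le_energy V O
  rw [chg_ofParts] at hS
  have one_kind : V.card = 0 ∨ O.card = 0 := by
    rw [← mul_eq_zero]
    zify
    nlinarith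
  have energy_eq : energy (ofParts V O) = V.card ^ 2 + O.card ^ 2 := by
    zify
    rcases one_kind with h | h <;> rw [hS, h] <;> ring
  rw [energy_ofParts] at energy_eq
  have hV := card_sq_le_sum_two_mul_add_one V
  have hO := card_sq_le_sum_two_mul_add_one O
  rw [vSet_eq_ofParts, chg_ofParts, eq_range_card_of_sum_two_mul_add_one_eq (P := V) (by omega),
    eq_range_card_of_sum_two_mul_add_one_eq (P := O) (by omega), Finset.card_range,
    Finset.card_range]
  congr 2 <;> omega

lemma sum_modeSign (S : Finset ℕ) : ∑ s ∈ S, modeSign s = chg S := by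
  obtain ⟨V, O, rfl⟩ := exists_eq_ofParts S
  have heven (p : ℕ) : modeSign (2 * p : ℕ) = -1 := modeSign_of_even (by simp)
  have hodd (p : ℕ) : modeSign (2 * p + 1 : ℕ) = 1 := modeSign_of_odd ⟨p, by push_cast; rfl⟩
  simp only [sum_ofParts, heven, hodd, chg_ofParts, Finset.sum_const]
  push_cast
  ring

lemma sum_modeEnergy (S : Finset ℕ) : ∑ s ∈ S, modeEnergy s = energy S := by
  rw [energy, Nat.cast_sum]
  exact Finset.sum_congr rfl fun s _ => by unfold modeEnergy; norm_cast

end ChargeAndEnergy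

section ChargeComponent

lemma mem_FockComp_iff_chg {n : ℤ} {w : FockD} :
    w ∈ FockComp n ↔ ∀ S, w S ≠ 0 → chg S = n := by
  have hspan : FockComp n = Finsupp.supported ℂ ℂ {S | chg S = n} := by
    rw [Finsupp.supported_eq_span_single, FockComp]
    congr 1
    ext x
    exact exists_congr fun S => and_congr_right fun _ => eq_comm
  rw [hspan, Finsupp.mem_supported]
  simp [Set.subset_def]

lemma mem_FockComp_iff {n : ℤ} {w : FockD} : w ∈ FockComp n ↔ heisenberg 0 w = (n : ℂ) • w := by
  rw [mem_FockComp_iff_chg, heisenberg_zero_eq_weightedNumber, Finsupp.ext_iff]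
  refine forall_congr' fun S => ?_
  rw [weightedNumber_apply, sum_modeSign, Finsupp.smul_apply, smul_eq_mul, mul_eq_mul_right_iff,
    Int.cast_inj, or_iff_not_imp_right]

lemma eD_mem_FockComp {S : Finset ℕ} {n : ℤ} (hS : chg S = n) : eD S ∈ FockComp n :=
  Submodule.subset_span ⟨S, hS, rfl⟩

lemma vD_mem_FockComp (n : ℤ) : vD n ∈ FockComp n := eD_mem_FockComp (chg_vSet n)

lemma heisenberg_mem_FockComp (m : ℤ) {n : ℤ} {w : FockD} (hw : w ∈ FockComp n) :
    heisenberg m w ∈ FockComp n := by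
  rw [mem_FockComp_iff] at hw ⊢
  rw [heisenberg_commutator, hw, map_smul]
  simp

lemma energyOp_eD (S : Finset ℕ) : energyOp (eD S) = (energy S : ℂ) • eD S := by
  rw [energyOp, weightedNumber_eD, sum_modeEnergy]

lemma energy_eq_of_energyOp_eq_smul {w : FockD} {d : ℤ} (hd : energyOp w = (d : ℂ) • w)
    {S : Finset ℕ} (hS : w S ≠ 0) : (energy S : ℤ) = d := by
  have h := DFunLike.congr_fun hd S
  rw [energyOp, weightedNumber_apply, sum_modeEnergy, Finsupp.smul_apply, smul_eq_mul] at h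
  exact_mod_cast mul_right_cancel₀ hS h

lemma eq_zero_of_energy_lt {n d : ℤ} {w : FockD} (hw : w ∈ FockComp n)
    (hd : energyOp w = (d : ℂ) • w) (hdn : d < n ^ 2) : w = 0 := by
  ext S
  by_contra hS
  have hle := chg_sq_le_energy S
  rw [mem_FockComp_iff_chg.1 hw S hS, energy_eq_of_energyOp_eq_smul hd hS] at hle
  omega

lemma eq_smul_vD {n : ℤ} {w : FockD} (hw : w ∈ FockComp n)
    (hd : energyOp w = ((n ^ 2 : ℤ) : ℂ) • w) : w = w (vSet n) • vD n := by
  ext S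
  rw [vD, Finsupp.smul_apply, eD_apply, smul_eq_mul]
  split_ifs with hS
  · rw [hS, mul_one]
  · rw [mul_zero]
    by_contra hwS
    have hchg := mem_FockComp_iff_chg.1 hw S hwS
    have henergy := energy_eq_of_energyOp_eq_smul hd hwS
    rw [← hchg] at henergy hS
    exact hS (eq_vSet_of_energy_eq henergy).symm

lemma energyOp_heisenberg_eq_smul {d : ℤ} {w : FockD} (hd : energyOp w = (d : ℂ) • w) (m : ℤ) :
    energyOp (heisenberg m w) = ((d - 2 * m : ℤ) : ℂ) • heisenberg m w := by
  rw [energyOp_heisenberg, hd, map_smul, ← sub_smul]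
  push_cast
  rfl

lemma heisenberg_vD_of_pos {m : ℤ} (hm : 0 < m) (n : ℤ) : heisenberg m (vD n) = 0 := by
  have hd : energyOp (vD n) = ((n ^ 2 : ℤ) : ℂ) • vD n := by
    rw [vD, energyOp_eD, ← energy_vSet, Int.cast_natCast]
  exact eq_zero_of_energy_lt (heisenberg_mem_FockComp m (vD_mem_FockComp n))
    (energyOp_heisenberg_eq_smul hd m) (by omega)

/-- If the energy of `w` exceeds its minimum `n²`, the Sugawara identity recovers `w` from the
vectors `h_m w` with `m > 0`, which have lower energy. -/
lemma mem_of_heisenberg_neg_mem {n d : ℤ} (hdn : n ^ 2 < d) {w : FockD} (hw : w ∈ FockComp n)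
    (hd : energyOp w = (d : ℂ) • w) {W : Submodule ℂ FockD}
    (hW : ∀ m : ℕ, heisenberg (-(m + 1)) (heisenberg (m + 1) w) ∈ W) : w ∈ W := by
  obtain ⟨M, hM⟩ := (eventually_sugawaraOp_eq_energyOp w).exists
  have hw_eq : (d - n ^ 2 : ℂ) • w =
      (2 : ℂ) • ∑ m ∈ Finset.range M, heisenberg (-(m + 1)) (heisenberg (m + 1) w) := by
    have hw0 := mem_FockComp_iff.1 hw
    rw [hd, sugawaraOp_apply, hw0, map_smul, hw0] at hM
    linear_combination (norm := module) -hM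
  have hne : (d - n ^ 2 : ℂ) ≠ 0 := by exact_mod_cast (sub_pos.2 hdn).ne'
  rw [← W.smul_mem_iff hne, hw_eq]
  exact W.smul_mem _ (W.sum_mem fun m _ => hW m)

theorem FockComp_le_of_vD_mem {n : ℤ} {W : Submodule ℂ FockD} (hv : vD n ∈ W)
    (hW : ∀ m : ℕ, ∀ w ∈ W, heisenberg (-(m + 1)) w ∈ W) : FockComp n ≤ W := by
  have eigenvector_mem (d : ℤ) :
      ∀ w ∈ FockComp n, energyOp w = (d : ℂ) • w → w ∈ W := by
    induction d using Int.strongRec (m := n ^ 2) with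
    | lt d hdn => exact fun w hw hd => eq_zero_of_energy_lt hw hd hdn ▸ W.zero_mem
    | ge d hdn ih =>
      intro w hw hd
      rcases hdn.eq_or_lt with rfl | hdn
      · exact eq_smul_vD hw hd ▸ W.smul_mem _ hv
      · exact mem_of_heisenberg_neg_mem hdn hw hd fun m => hW m _ <|
          ih _ (by omega) _ (heisenberg_mem_FockComp _ hw) (energyOp_heisenberg_eq_smul hd _)
  rw [FockComp, Submodule.span_le]
  rintro _ ⟨S, hS, rfl⟩
  exact eigenvector_mem (energy S) _ (eD_mem_FockComp hS) (by rw [energyOp_eD, Int.cast_natCast])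

lemma isBosonicVacuum_vD (n : ℤ) :
    IsBosonicVacuum (fun m : ℕ => (m + 1 : ℂ)⁻¹ • heisenberg (-(m + 1)))
      (fun m : ℕ => heisenberg (m + 1)) (vD n) where
  create_comm i j := by
    refine LinearMap.ext fun w => ?_
    simp only [Module.End.mul_apply, LinearMap.smul_apply, map_smul]
    rw [heisenberg_commute_of_add_ne_zero (by omega), smul_comm]
  annihilate_create i j w := by
    have hj : (j + 1 : ℂ) ≠ 0 := by exact_mod_cast j.succ_ne_zero
    have hij : (i + 1 + -(j + 1) : ℤ) = 0 ↔ i = j := by omega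
    simp only [LinearMap.smul_apply, map_smul, heisenberg_commutator (i + 1), hij, smul_add]
    split_ifs with h
    · subst h
      push_cast
      rw [inv_smul_smul₀ hj]
    · rw [smul_zero]
  annihilate_vacuum i := heisenberg_vD_of_pos (by omega) n

end ChargeComponent

/-- There is a ℂ-linear bijection `Φ` from the charge-`n` component `F_{(n)}` onto the
polynomial algebra `ℂ[x_1, x_2, …]` (realized as `MvPolynomial ℕ ℂ`, the variable of
index `m : ℕ` standing for `x_{m+1}`) with `Φ(v_n) = 1`, and intertwining the Heisenberg
action: for `u ∈ F_{(n)}` and `m ≥ 1`, `Φ(h_m u) = ∂Φ(u)/∂x_m`,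
`Φ(h_{−m} u) = m · x_m · Φ(u)`, and `Φ(h_0 u) = n · Φ(u)`. -/
theorem bosonic_realization_of_charge_component (n : ℤ) :
    ∃ Φ : FockD →ₗ[ℂ] MvPolynomial ℕ ℂ,
      Set.BijOn Φ (FockComp n : Set FockD) Set.univ ∧
      Φ (vD n) = 1 ∧
      ∀ u ∈ FockComp n,
        (∀ m : ℕ, Φ (hD ((m : ℤ) + 1) u) = MvPolynomial.pderiv m (Φ u)) ∧
        (∀ m : ℕ, Φ (hD (-(m : ℤ) - 1) u) = ((m : ℂ) + 1) • (MvPolynomial.X m * Φ u)) ∧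
        Φ (hD 0 u) = (n : ℂ) • Φ u := by
  have hv : vD n ≠ 0 := Finsupp.single_ne_zero.2 one_ne_zero
  have heisenberg_eq (m : ℕ) (w : FockD) : heisenberg (-(m + 1)) w =
      (m + 1 : ℂ) • ((m + 1 : ℂ)⁻¹ • heisenberg (-(m + 1))) w := by
    rw [LinearMap.smul_apply, smul_inv_smul₀ (by exact_mod_cast m.succ_ne_zero)]
  obtain ⟨Φ, hΦ, hΦv, hΦW⟩ := (isBosonicVacuum_vD n).exists_bijOn hv (vD_mem_FockComp n)
    (fun m w hw => Submodule.smul_mem _ _ (heisenberg_mem_FockComp _ hw))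
    (fun W hvW hW => FockComp_le_of_vD_mem hvW fun m w hw =>
      heisenberg_eq m w ▸ W.smul_mem _ (hW m w hw))
  simp only [← coe_heisenberg, ← neg_add']
  refine ⟨Φ, hΦ, hΦv, fun u hu => ⟨(hΦW u hu).1, fun m => ?_, ?_⟩⟩
  · rw [heisenberg_eq, map_smul, (hΦW u hu).2]
  · rw [mem_FockComp_iff.1 hu, map_smul]
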